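/- Let X be a locally connected topological space, f : X → ℝ continuous, λ ∈ ℝ, and let x ≠ y be two points lying in a common connected component C of {f < λ} (i.e. y belongs to the connected component of x in {f < λ}). Assume the set S = {μ ∈ ℝ : μ > f(y) and x does not belong to the connected component of y in {f < μ}} is nonempty. Then S ⊆ (f(y), λ); consequently λ_x(y) := sup S satisfies f(y) < λ_x(y) < λ, and moreover x does not belong to the connected component of y in {f < λ_x(y)}. (Equations (2.20)–(2.22) and Step 1 of the proof of Proposition 2.7 of the paper: the separating value λ_x(y) is strictly between f(y) and λ, and the open well of y at level λ_x(y) does not contain x.) -/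

import Mathlib

/-!
In a locally connected space, the connected components of a point in a directed family of open
sets exhaust its component in the union. If `s` is the supremum of the levels separating `x` from
`y`, then `{f < s}` is the directed union of the sets `{f < μ}` over these levels `μ`, so `s`
itself separates `x` from `y`. As the wells of `y` increase with the level, every level at which
`x` and `y` are joined, in particular `l`, lies strictly above `s`.
-/

open Set

section Component

variable {X : Type*} [TopologicalSpace X]

theorem mem_connectedComponentIn_comm {F : Set X} {x y : X} :
    x ∈ connectedComponentIn F y ↔ y ∈ connectedComponentIn F x := by
  have symm {a b : X} (h : a ∈ connectedComponentIn F b) : b ∈ connectedComponentIn F a := by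
    rw [← connectedComponentIn_eq h]
    exact mem_connectedComponentIn (connectedComponentIn_nonempty_iff.1 ⟨a, h⟩)
  exact ⟨symm, symm⟩

theorem connectedComponentIn_iUnion_of_directed [LocallyConnectedSpace X] {ι : Sort*}
    {U : ι → Set X} (hU : ∀ i, IsOpen (U i)) (hdir : Directed (· ⊆ ·) U) (y : X) :
    connectedComponentIn (⋃ i, U i) y = ⋃ i, connectedComponentIn (U i) y := by
  refine Subset.antisymm (fun x hx ↦ ?_)
    (iUnion_subset fun i ↦ connectedComponentIn_mono y (subset_iUnion U i))
  refine isPreconnected_connectedComponentIn.subset_of_closure_inter_subset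
    (isOpen_iUnion fun i ↦ (hU i).connectedComponentIn) ?_ ?_ hx
  · have hy : y ∈ ⋃ i, U i := connectedComponentIn_nonempty_iff.1 ⟨x, hx⟩
    obtain ⟨i, hyi⟩ := mem_iUnion.1 hy
    exact ⟨y, mem_connectedComponentIn hy, mem_iUnion.2 ⟨i, mem_connectedComponentIn hyi⟩⟩
  · rintro z ⟨hz_closure, hz⟩
    obtain ⟨i, hzi⟩ := mem_iUnion.1 (connectedComponentIn_subset _ _ hz)
    have hzz : z ∈ connectedComponentIn (U i) z := mem_connectedComponentIn hzi
    obtain ⟨w, hwz, hw⟩ := mem_closure_iff.1 hz_closure _ (hU i).connectedComponentIn hzz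
    obtain ⟨j, hwy⟩ := mem_iUnion.1 hw
    obtain ⟨k, hik, hjk⟩ := hdir i j
    have hzw : z ∈ connectedComponentIn (U k) w :=
      mem_connectedComponentIn_comm.1 (connectedComponentIn_mono z hik hwz)
    have hwy : w ∈ connectedComponentIn (U k) y := connectedComponentIn_mono y hjk hwy
    exact mem_iUnion.2 ⟨k, connectedComponentIn_eq hwy ▸ hzw⟩

theorem connectedComponentIn_setOf_lt_eq_biUnion_of_isLUB [LocallyConnectedSpace X]
    {α : Type*} [LinearOrder α] {f : X → α} (hf : UpperSemicontinuous f) {t : Set α} {s : α}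
    (hs : IsLUB t s) (y : X) :
    connectedComponentIn {z | f z < s} y = ⋃ μ ∈ t, connectedComponentIn {z | f z < μ} y := by
  have hunion : {z | f z < s} = ⋃ μ : t, {z | f z < μ} := by
    change f ⁻¹' Iio s = ⋃ μ : t, f ⁻¹' Iio (μ : α)
    rw [← preimage_iUnion, iUnion_coe_set, hs.biUnion_Iio_eq]
  have hopen (μ : t) : IsOpen {z | f z < μ} := hf.isOpen_preimage μ
  have hmono : Monotone fun μ : t ↦ {z | f z < μ} := fun _ _ h _ hz ↦ lt_of_lt_of_le hz h
  rw [hunion, connectedComponentIn_iUnion_of_directed hopen hmono.directed_le, iUnion_coe_set]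

end Component

section SeparatingLevels

variable {X α : Type*} [TopologicalSpace X]

/-- The levels `μ` above `f y` at which `x` lies outside the open well of `y`, that is, outside
the connected component of `y` in `{f < μ}`. Their supremum is the separating value `λ_x(y)`. -/
def separatingLevels [Preorder α] (f : X → α) (x y : X) : Set α :=
  {μ | f y < μ ∧ x ∉ connectedComponentIn {z | f z < μ} y}

theorem lt_of_mem_separatingLevels [LinearOrder α] {f : X → α} {x y : X} {μ c : α}
    (hμ : μ ∈ separatingLevels f x y) (hc : x ∈ connectedComponentIn {z | f z < c} y) :
    μ < c := by
  by_contra! hcμ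
  exact hμ.2 (connectedComponentIn_mono y (fun _ hz ↦ lt_of_lt_of_le hz hcμ) hc)

theorem separatingLevels_subset_Ioo [LinearOrder α] {f : X → α} {x y : X} {c : α}
    (hc : x ∈ connectedComponentIn {z | f z < c} y) :
    separatingLevels f x y ⊆ Ioo (f y) c :=
  fun _ hμ ↦ ⟨hμ.1, lt_of_mem_separatingLevels hμ hc⟩

theorem mem_separatingLevels_of_isLUB [LocallyConnectedSpace X] [LinearOrder α] {f : X → α}
    (hf : UpperSemicontinuous f) {x y : X} {s : α} (hne : (separatingLevels f x y).Nonempty)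
    (hs : IsLUB (separatingLevels f x y) s) : s ∈ separatingLevels f x y := by
  obtain ⟨μ, hμ⟩ := hne
  refine ⟨hμ.1.trans_le (hs.1 hμ), ?_⟩
  rw [connectedComponentIn_setOf_lt_eq_biUnion_of_isLUB hf hs, mem_iUnion₂]
  rintro ⟨ν, hν, hx⟩
  exact hν.2 hx

end SeparatingLevels

theorem stmt7_general {X α : Type*} [TopologicalSpace X] [LocallyConnectedSpace X]
    [ConditionallyCompleteLinearOrder α] {f : X → α} (hf : UpperSemicontinuous f) {l : α}
    {x y : X} (hy : y ∈ connectedComponentIn {z | f z < l} x)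
    (hne : (separatingLevels f x y).Nonempty) :
    separatingLevels f x y ⊆ Ioo (f y) l ∧
      f y < sSup (separatingLevels f x y) ∧ sSup (separatingLevels f x y) < l ∧
      x ∉ connectedComponentIn {z | f z < sSup (separatingLevels f x y)} y := by
  have hsub : separatingLevels f x y ⊆ Ioo (f y) l :=
    separatingLevels_subset_Ioo (mem_connectedComponentIn_comm.1 hy)
  have hlub : IsLUB (separatingLevels f x y) (sSup (separatingLevels f x y)) :=
    isLUB_csSup hne (bddAbove_Ioo.mono hsub)
  have hmem : sSup (separatingLevels f x y) ∈ separatingLevels f x y :=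
    mem_separatingLevels_of_isLUB hf hne hlub
  exact ⟨hsub, (hsub hmem).1, (hsub hmem).2, hmem.2⟩

/-- Equations (2.20)–(2.22) and Step 1 of the proof of Proposition 2.7: the separating
value `λ_x(y) = sup S` lies strictly between `f(y)` and `λ`, and the open well of `y`
at level `λ_x(y)` does not contain `x`. -/
theorem stmt7 {X : Type*} [TopologicalSpace X] [LocallyConnectedSpace X]
    (f : X → ℝ) (hf : Continuous f) (l : ℝ) (x y : X) (hxy : x ≠ y)
    (hy : y ∈ connectedComponentIn {z | f z < l} x)
    (S : Set ℝ)
    (hS : S = {μ : ℝ | f y < μ ∧ x ∉ connectedComponentIn {z | f z < μ} y})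
    (hSne : S.Nonempty) :
    S ⊆ Set.Ioo (f y) l ∧ f y < sSup S ∧ sSup S < l ∧
      x ∉ connectedComponentIn {z | f z < sSup S} y := by
  subst hS
  exact stmt7_general hf.upperSemicontinuous hy hSne
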